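/- Let v : ℝ × E → ℝ be C¹. Then v(t, φ(t, X)) · det F(t, X) = v(0, X) for all (t, X) if and only if ∂v/∂t(t, x) + D_x v(t, x)(u(t, x)) + v(t, x) · (div u)(t, x) = 0 for all (t, x) (equivalently ∂v/∂t + div(v u) = 0); i.e. the 3-form v·det is moving with the fluid if and only if v satisfies the continuity equation. -/

import Mathlib

noncomputable section

local notation "E3" => EuclideanSpace ℝ (Fin 3)

/-- divergence of a vector field: trace of its Fréchet derivative. -/
def divv (w : E3 → E3) (x : E3) : ℝ :=
  LinearMap.trace ℝ E3 (fderiv ℝ w x : E3 →ₗ[ℝ] E3)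

/-!
Along a trajectory, the variational equation `(Dφ)' = Du ∘ Dφ` and Liouville's formula
`(det Dφ)' = div u * det Dφ` show that `v * det Dφ` has derivative
`(Dv/Dt + v * div u) * det Dφ`. Since `det Dφ = exp (∫ div u)` never vanishes, the product is
constant along every trajectory iff `Dv/Dt + v * div u` vanishes along every trajectory, and at each
time the trajectories sweep out the whole space.

The variational equation holds without any joint regularity of the flow: a Grönwall estimate bounds
the difference quotients `q ε t = (φ t (X + ε • h) - φ t X) / ε`, so by strict differentiability of
`u` their time derivatives converge to `Du (Dφ h)` as `(ε, t) → (0, t₀)` jointly, which is the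
uniformity needed to differentiate the limit in `t`.
-/

open Asymptotics Filter Function Set Topology

section Matrix

variable {𝕜 : Type*} [NontriviallyNormedField 𝕜] {n : Type*} [Fintype n] [DecidableEq n]

theorem hasDerivAt_matrix_det {M : 𝕜 → Matrix n n 𝕜} {M' : Matrix n n 𝕜} {t : 𝕜}
    (hM : ∀ i j, HasDerivAt (fun τ => M τ i j) (M' i j) t) :
    HasDerivAt (fun τ => (M τ).det) (∑ i, ((M t).updateRow i (M' i)).det) t := by
  let D : ContinuousMultilinearMap 𝕜 (fun _ : n => n → 𝕜) 𝕜 :=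
    { Matrix.detRowAlternating.toMultilinearMap with cont := continuous_id.matrix_det }
  have hrows : HasDerivAt (fun τ i => M τ i) (fun i => M' i) t :=
    hasDerivAt_pi.2 fun i => hasDerivAt_pi.2 (hM i)
  have h := (D.hasStrictFDerivAt (fun i => M t i)).hasFDerivAt.comp_hasDerivAt t hrows
  rw [ContinuousMultilinearMap.linearDeriv_apply] at h
  exact h

theorem sum_det_updateRow_mul {R : Type*} [CommRing R] (B M : Matrix n n R) :
    ∑ i, (M.updateRow i ((B * M) i)).det = B.trace * M.det := by
  have hrow (i : n) : (B * M) i = ∑ k, B i k • M k := by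
    ext j
    simp [Matrix.mul_apply]
  simp only [hrow, Matrix.det_updateRow_sum, smul_eq_mul, Matrix.trace, Matrix.diag_apply,
    Finset.sum_mul]

theorem hasDerivAt_linearMap_det [CompleteSpace 𝕜] {E : Type*} [NormedAddCommGroup E]
    [NormedSpace 𝕜 E] [FiniteDimensional 𝕜 E] {M : 𝕜 → E →ₗ[𝕜] E} {A : E →ₗ[𝕜] E} {t : 𝕜}
    (hM : ∀ x, HasDerivAt (fun τ => M τ x) (A (M t x)) t) :
    HasDerivAt (fun τ => LinearMap.det (M τ)) (LinearMap.trace 𝕜 E A * LinearMap.det (M t)) t := by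
  let b := Module.finBasis 𝕜 E
  have hentry (i j) : HasDerivAt (fun τ => LinearMap.toMatrix b b (M τ) i j)
      ((LinearMap.toMatrix b b A * LinearMap.toMatrix b b (M t)) i j) t := by
    rw [← LinearMap.toMatrix_comp]
    simp only [LinearMap.toMatrix_apply]
    exact (LinearMap.toContinuousLinearMap (b.coord i)).hasFDerivAt.comp_hasDerivAt t (hM (b j))
  have h := hasDerivAt_matrix_det hentry
  rw [sum_det_updateRow_mul] at h
  simpa only [LinearMap.det_toMatrix, ← LinearMap.trace_eq_matrix_trace] using h

end Matrix

section ODE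

theorem forall_eq_iff_of_hasDerivAt {𝕜 G : Type*} [RCLike 𝕜] [NormedAddCommGroup G]
    [NormedSpace 𝕜 G] {f f' : 𝕜 → G} (hf : ∀ t, HasDerivAt f (f' t) t) (t₀ : 𝕜) :
    (∀ t, f t = f t₀) ↔ ∀ t, f' t = 0 := by
  refine ⟨fun h t => ?_, fun h t => ?_⟩
  · have hconst := hf t
    rw [funext h] at hconst
    exact hconst.unique (hasDerivAt_const t _)
  · exact is_const_of_deriv_eq_zero (fun s => (hf s).differentiableAt)
      (fun s => (hf s).deriv.trans (h s)) t t₀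

theorem eq_mul_exp_integral_of_hasDerivAt {f a : ℝ → ℝ} (ha : Continuous a)
    (hf : ∀ t, HasDerivAt f (a t * f t) t) (t₀ t : ℝ) :
    f t = f t₀ * Real.exp (∫ s in t₀..t, a s) := by
  have hint (t : ℝ) : HasDerivAt (fun t => ∫ s in t₀..t, a s) (a t) t :=
    ha.integral_hasStrictDerivAt t₀ t |>.hasDerivAt
  have hquot (t : ℝ) : HasDerivAt (fun t => f t * Real.exp (-∫ s in t₀..t, a s)) 0 t :=
    ((hf t).mul (hint t).fun_neg.exp).congr_deriv (by ring)
  have h := (forall_eq_iff_of_hasDerivAt hquot t₀).2 (fun _ => rfl) t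
  simp only [intervalIntegral.integral_same, neg_zero, Real.exp_zero, mul_one] at h
  rw [← h, mul_assoc, ← Real.exp_add, neg_add_cancel, Real.exp_zero, mul_one]

variable {E : Type*} [NormedAddCommGroup E] [NormedSpace ℝ E]

theorem norm_le_mul_exp_of_norm_deriv_le_of_norm_le {d d' : ℝ → E} {K C r a : ℝ} (hK : 0 ≤ K)
    (hC : 0 < C) (hd : ∀ t ∈ Icc 0 a, HasDerivAt d (d' t) t) (hd0 : ‖d 0‖ ≤ C)
    (hr : C * Real.exp ((K + 1) * a) ≤ r)
    (hd' : ∀ t ∈ Icc 0 a, ‖d t‖ ≤ r → ‖d' t‖ ≤ K * ‖d t‖) {t : ℝ} (ht : t ∈ Icc 0 a) :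
    ‖d t‖ ≤ C * Real.exp ((K + 1) * a) := by
  -- The exponent `K + 1`, rather than `K`, provides the strict inequality that lets `‖d‖` never
  -- cross `B`, and hence never leave the region `‖d‖ ≤ r` where `d'` is controlled.
  let B : ℝ → ℝ := fun t => C * Real.exp ((K + 1) * t)
  have hBpos (t : ℝ) : 0 < B t := by positivity
  have hB (t : ℝ) : HasDerivAt B ((K + 1) * B t) t :=
    (((hasDerivAt_id t).const_mul (K + 1)).exp.const_mul C).congr_deriv (by simp only [id, B]; ring)
  have hBmono (t : ℝ) (ht : t ≤ a) : B t ≤ B a := by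
    simp only [B]
    gcongr
  refine (image_norm_le_of_norm_deriv_right_lt_deriv_boundary
    (fun t ht => (hd t ht).continuousAt.continuousWithinAt)
    (fun t ht => (hd t (Ico_subset_Icc_self ht)).hasDerivWithinAt) (by simpa [B] using hd0) hB
    (fun t ht hdB => ?_) ht).trans (hBmono t ht.2)
  calc ‖d' t‖ ≤ K * ‖d t‖ :=
        hd' t (Ico_subset_Icc_self ht) (hdB.le.trans ((hBmono t ht.2.le).trans hr))
    _ < (K + 1) * B t := by rw [hdB]; linarith [hBpos t]

theorem norm_le_mul_exp_of_norm_deriv_le_of_norm_le_of_abs_sub_le {d d' : ℝ → E}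
    {K C r a t₀ : ℝ} (hK : 0 ≤ K) (hC : 0 < C)
    (hd : ∀ t, |t - t₀| ≤ a → HasDerivAt d (d' t) t) (hd0 : ‖d t₀‖ ≤ C)
    (hr : C * Real.exp ((K + 1) * a) ≤ r)
    (hd' : ∀ t, |t - t₀| ≤ a → ‖d t‖ ≤ r → ‖d' t‖ ≤ K * ‖d t‖) {t : ℝ} (ht : |t - t₀| ≤ a) :
    ‖d t‖ ≤ C * Real.exp ((K + 1) * a) := by
  have hadd {s : ℝ} (hs : s ∈ Icc 0 a) : |t₀ + s - t₀| ≤ a := by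
    rw [add_sub_cancel_left, abs_of_nonneg hs.1]
    exact hs.2
  have hsub {s : ℝ} (hs : s ∈ Icc 0 a) : |t₀ - s - t₀| ≤ a := by
    rw [sub_sub_cancel_left, abs_neg, abs_of_nonneg hs.1]
    exact hs.2
  obtain ⟨hlower, hupper⟩ := abs_le.1 ht
  rcases le_total t₀ t with h | h
  · simpa using norm_le_mul_exp_of_norm_deriv_le_of_norm_le (d := fun s => d (t₀ + s)) hK hC
      (fun s hs => (hd _ (hadd hs)).comp_const_add t₀ s) (by simpa using hd0) hr
      (fun s hs => hd' _ (hadd hs)) (t := t - t₀) ⟨by linarith, by linarith⟩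
  · simpa using norm_le_mul_exp_of_norm_deriv_le_of_norm_le (d := fun s => d (t₀ - s)) hK hC
      (fun s hs => (hd _ (hsub hs)).comp_const_sub t₀ s) (by simpa using hd0) hr
      (fun s hs => by simpa using hd' _ (hsub hs)) (t := t₀ - t) ⟨by linarith, by linarith⟩

end ODE

section Calculus

theorem tendsto_prod_nhds_of_isBigO_one_deriv {𝕜 ι G : Type*} [RCLike 𝕜] [NormedAddCommGroup G]
    [NormedSpace 𝕜 G] {l : Filter ι} {f f' : ι → 𝕜 → G} {t₀ : 𝕜} {c : G}
    (hf : ∀ᶠ p : ι × 𝕜 in l ×ˢ 𝓝 t₀, HasDerivAt (f p.1) (f' p.1 p.2) p.2)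
    (hf' : (fun p : ι × 𝕜 => f' p.1 p.2) =O[l ×ˢ 𝓝 t₀] (fun _ => (1 : ℝ)))
    (hc : Tendsto (fun i => f i t₀) l (𝓝 c)) :
    Tendsto (fun p : ι × 𝕜 => f p.1 p.2) (l ×ˢ 𝓝 t₀) (𝓝 c) := by
  obtain ⟨C, hC⟩ := hf'.bound
  obtain ⟨s, hs, T, hT, hsT⟩ := eventually_prod_iff.1 (hf.and hC)
  obtain ⟨δ, hδ, hball⟩ := Metric.eventually_nhds_iff_ball.1 hT
  have hlip : ∀ᶠ p : ι × 𝕜 in l ×ˢ 𝓝 t₀, ‖f p.1 p.2 - f p.1 t₀‖ ≤ C * ‖p.2 - t₀‖ := by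
    filter_upwards [hs.prod_mk (Metric.ball_mem_nhds t₀ hδ)] with p ⟨hp₁, hp₂⟩
    exact (convex_ball t₀ δ).norm_image_sub_le_of_norm_hasDerivWithin_le
      (fun t ht => (hsT hp₁ (hball t ht)).1.hasDerivWithinAt)
      (fun t ht => by simpa using (hsT hp₁ (hball t ht)).2) (Metric.mem_ball_self hδ) hp₂
  have hsub : Tendsto (fun p : ι × 𝕜 => C * ‖p.2 - t₀‖) (l ×ˢ 𝓝 t₀) (𝓝 0) := by
    have hcont : Continuous fun t : 𝕜 => C * ‖t - t₀‖ := by fun_prop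
    exact (hcont.tendsto' t₀ 0 (by simp)).comp tendsto_snd
  simpa using (squeeze_zero_norm' hlip hsub).add (hc.comp tendsto_fst)

theorem hasFDerivAt_of_hasFDerivAt_uncurry {𝕜 P E G : Type*} [NontriviallyNormedField 𝕜]
    [NormedAddCommGroup P] [NormedSpace 𝕜 P] [NormedAddCommGroup E] [NormedSpace 𝕜 E]
    [NormedAddCommGroup G] [NormedSpace 𝕜 G] {f : P → E → G} {p : P} {x : E}
    {f' : P × E →L[𝕜] G} (hf : HasFDerivAt (uncurry f) f' (p, x)) :
    HasFDerivAt (f p) (f'.comp (.inr 𝕜 P E)) x :=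
  HasFDerivAt.comp (g := uncurry f) x hf (hasFDerivAt_prodMk_right p x)

end Calculus

section Line

variable {𝕜 P E G : Type*} [NontriviallyNormedField 𝕜] [TopologicalSpace P]
  [NormedAddCommGroup E] [NormedSpace 𝕜 E] [NormedAddCommGroup G]
  {f : P × E → G} {p₀ : P} {x : E}

theorem tendsto_prodMk_add_smul (p₀ : P) (x h : E) :
    Tendsto (fun q : 𝕜 × P => (q.2, x + q.1 • h)) (𝓝[≠] 0 ×ˢ 𝓝 p₀) (𝓝 (p₀, x)) := by
  have hcont : Continuous fun q : 𝕜 × P => (q.2, x + q.1 • h) := by fun_prop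
  refine (hcont.tendsto' (0, p₀) (p₀, x) (by simp)).mono_left ?_
  rw [nhds_prod_eq]
  exact prod_mono_left _ nhdsWithin_le_nhds

theorem isBigO_fst_comp_add_smul (hf : f =O[𝓝 (p₀, x)] fun q => q.2 - x) (h : E) :
    (fun q : 𝕜 × P => f (q.2, x + q.1 • h)) =O[𝓝[≠] 0 ×ˢ 𝓝 p₀] Prod.fst :=
  (hf.comp_tendsto (tendsto_prodMk_add_smul p₀ x h)).trans
    (.of_bound ‖h‖ (.of_forall fun q => by simp [norm_smul, mul_comm]))

theorem isLittleO_fst_comp_add_smul (hf : f =o[𝓝 (p₀, x)] fun q => q.2 - x) (h : E) :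
    (fun q : 𝕜 × P => f (q.2, x + q.1 • h)) =o[𝓝[≠] 0 ×ˢ 𝓝 p₀] Prod.fst :=
  (hf.comp_tendsto (tendsto_prodMk_add_smul p₀ x h)).trans_isBigO
    (.of_bound ‖h‖ (.of_forall fun q => by simp [norm_smul, mul_comm]))

end Line

section Flow

variable {E G : Type*} [NormedAddCommGroup E] [NormedSpace ℝ E]
  [NormedAddCommGroup G] [NormedSpace ℝ G]

theorem exists_lipschitz_tube {f : ℝ → E → G} {γ : ℝ → E} {t₀ : ℝ}
    (hf : ContDiffAt ℝ 1 (uncurry f) (t₀, γ t₀)) (hγ : ContinuousAt γ t₀) :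
    ∃ K ≥ 0, ∃ a > 0, ∃ r > 0, ∀ t, |t - t₀| ≤ a → ∀ y, ‖y - γ t‖ ≤ r →
      ‖f t y - f t (γ t)‖ ≤ K * ‖y - γ t‖ := by
  obtain ⟨K, U, hU, hK⟩ := hf.exists_lipschitzOnWith
  have htube : Tendsto (fun p : ℝ × E => (p.1, γ p.1 + p.2)) (𝓝 (t₀, 0)) (𝓝 (t₀, γ t₀)) := by
    have h : ContinuousAt (fun p : ℝ × E => γ p.1 + p.2) (t₀, 0) :=
      (ContinuousAt.comp (x := (t₀, (0 : E))) hγ continuousAt_fst).add continuousAt_snd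
    simpa using (continuousAt_fst.prodMk h).tendsto
  obtain ⟨⟨a, r⟩, ⟨ha, hr⟩, har⟩ := (Metric.nhds_basis_closedBall.prod_nhds
    Metric.nhds_basis_closedBall).eventually_iff.1 (htube.eventually_mem hU)
  have hmem {t : ℝ} (ht : |t - t₀| ≤ a) {y : E} (hy : ‖y - γ t‖ ≤ r) : (t, y) ∈ U := by
    simpa using har (x := (t, y - γ t)) ⟨by simpa [Real.dist_eq] using ht, by simpa using hy⟩
  refine ⟨K, K.2, a, ha, r, hr, fun t ht y hy => ?_⟩
  simpa [Prod.dist_eq, dist_eq_norm] using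
    hK.dist_le_mul (t, y) (hmem ht hy) (t, γ t) (hmem ht (by simpa using hr.le))

variable {u φ : ℝ → E → E} {t₀ : ℝ} {X : E}

theorem isBigO_flow_sub_flow (hu : ContDiffAt ℝ 1 (uncurry u) (t₀, φ t₀ X))
    (hφ : ∀ Y, IsIntegralCurve (φ · Y) u)
    (hφX : DifferentiableAt ℝ (φ t₀) X) :
    (fun p : ℝ × E => φ p.1 p.2 - φ p.1 X) =O[𝓝 (t₀, X)] fun p => p.2 - X := by
  obtain ⟨K, hK, a, ha, r, hr, hlip⟩ := exists_lipschitz_tube hu (hφ X).continuous.continuousAt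
  obtain ⟨L, hL, hφL⟩ := hφX.isBigO_sub.exists_pos
  set D := Real.exp ((K + 1) * a)
  have hsmall : ∀ᶠ Y in 𝓝 X, L * ‖Y - X‖ * D ≤ r := by
    have : Continuous fun Y => L * ‖Y - X‖ * D := by fun_prop
    exact (this.tendsto' X 0 (by simp)).eventually_le_const hr
  refine .of_bound (L * D) ?_
  filter_upwards [prod_mem_nhds (Metric.closedBall_mem_nhds t₀ ha) (hφL.bound.and hsmall)]
    with ⟨t, Y⟩ ⟨ht, hY, hYr⟩
  rcases eq_or_ne Y X with rfl | hne
  · simp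
  have hpos : 0 < ‖Y - X‖ := norm_pos_iff.2 (sub_ne_zero.2 hne)
  calc ‖φ t Y - φ t X‖ ≤ L * ‖Y - X‖ * D :=
        norm_le_mul_exp_of_norm_deriv_le_of_norm_le_of_abs_sub_le hK (by positivity)
          (fun s _ => (hφ Y s).sub (hφ X s)) hY hYr (fun s hs => hlip s hs (φ s Y)) ht
    _ = L * D * ‖Y - X‖ := by ring

theorem continuousAt_uncurry_flow (hu : ContDiffAt ℝ 1 (uncurry u) (t₀, φ t₀ X))
    (hφ : ∀ Y, IsIntegralCurve (φ · Y) u)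
    (hφX : DifferentiableAt ℝ (φ t₀) X) : ContinuousAt (uncurry φ) (t₀, X) := by
  have hsub : Tendsto (fun p : ℝ × E => φ p.1 p.2 - φ p.1 X) (𝓝 (t₀, X)) (𝓝 0) := by
    refine (isBigO_flow_sub_flow hu hφ hφX).trans_tendsto ?_
    have hcont : Continuous fun p : ℝ × E => p.2 - X := by fun_prop
    exact hcont.tendsto' _ _ (by simp)
  have hX : Tendsto (fun p : ℝ × E => φ p.1 X) (𝓝 (t₀, X)) (𝓝 (φ t₀ X)) :=
    (hφ X).continuous.continuousAt.tendsto.comp continuousAt_fst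
  simpa [ContinuousAt, uncurry_def] using hsub.add hX

theorem isLittleO_velocity_sub_linearization (hu : ContDiffAt ℝ 1 (uncurry u) (t₀, φ t₀ X))
    (hφ : ∀ Y, IsIntegralCurve (φ · Y) u)
    (hφX : DifferentiableAt ℝ (φ t₀) X) :
    (fun p : ℝ × E => u p.1 (φ p.1 p.2) - u p.1 (φ p.1 X)
      - fderiv ℝ (u t₀) (φ t₀ X) (φ p.1 p.2 - φ p.1 X)) =o[𝓝 (t₀, X)] fun p => p.2 - X := by
  have hstrict := hu.hasStrictFDerivAt one_ne_zero
  have hX : Tendsto (fun p : ℝ × E => φ p.1 X) (𝓝 (t₀, X)) (𝓝 (φ t₀ X)) :=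
    (hφ X).continuous.continuousAt.tendsto.comp continuousAt_fst
  have hpair : Tendsto (fun p : ℝ × E => ((p.1, φ p.1 p.2), (p.1, φ p.1 X))) (𝓝 (t₀, X))
      (𝓝 ((t₀, φ t₀ X), (t₀, φ t₀ X))) :=
    (continuousAt_fst.prodMk_nhds (continuousAt_uncurry_flow hu hφ hφX)).prodMk_nhds
      (continuousAt_fst.prodMk_nhds hX)
  have hdist : (fun p : ℝ × E => (p.1, φ p.1 p.2) - (p.1, φ p.1 X))
      =O[𝓝 (t₀, X)] fun p => p.2 - X :=
    ((isBigO_zero _ _).prod_left (isBigO_flow_sub_flow hu hφ hφX)).congr_left fun p => by simp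
  rw [(hasFDerivAt_of_hasFDerivAt_uncurry hstrict.hasFDerivAt).fderiv]
  refine ((hstrict.isLittleO.comp_tendsto hpair).trans_isBigO hdist).congr_left fun p => ?_
  simp only [comp_apply, uncurry_apply_pair, Prod.mk_sub_mk, sub_self,
    ContinuousLinearMap.comp_apply, ContinuousLinearMap.inr_apply]

theorem hasDerivAt_fderiv_flow_apply (hu : ContDiffAt ℝ 1 (uncurry u) (t₀, φ t₀ X))
    (hφ : ∀ Y, IsIntegralCurve (φ · Y) u) (hφX : ∀ᶠ t in 𝓝 t₀, DifferentiableAt ℝ (φ t) X)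
    (h : E) :
    HasDerivAt (fun t => fderiv ℝ (φ t) X h)
      (fderiv ℝ (u t₀) (φ t₀ X) (fderiv ℝ (φ t₀) X h)) t₀ := by
  let A := fderiv ℝ (u t₀) (φ t₀ X)
  let q : ℝ → ℝ → E := fun ε t => ε⁻¹ • (φ t (X + ε • h) - φ t X)
  let q' : ℝ → ℝ → E := fun ε t => ε⁻¹ • (u t (φ t (X + ε • h)) - u t (φ t X))
  have hq : ∀ᶠ t in 𝓝 t₀, Tendsto (fun ε => q ε t) (𝓝[≠] 0) (𝓝 (fderiv ℝ (φ t) X h)) :=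
    hφX.mono fun t ht => (ht.hasFDerivAt.hasLineDerivAt h).tendsto_slope_zero
  have hqq' : ∀ᶠ p : ℝ × ℝ in 𝓝[≠] 0 ×ˢ 𝓝 t₀, HasDerivAt (q p.1) (q' p.1 p.2) p.2 :=
    .of_forall fun p => ((hφ (X + p.1 • h) p.2).sub (hφ X p.2)).const_smul p.1⁻¹
  have hlin : Tendsto (fun p : ℝ × ℝ => q' p.1 p.2 - A (q p.1 p.2)) (𝓝[≠] 0 ×ˢ 𝓝 t₀) (𝓝 0) :=
    (isLittleO_fst_comp_add_smul
      (isLittleO_velocity_sub_linearization hu hφ hφX.self_of_nhds) h).tendsto_inv_smul_nhds_zero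
      |>.congr fun p => by simp [q, q', A, smul_sub]
  have hq_bdd : (fun p : ℝ × ℝ => q p.1 p.2) =O[𝓝[≠] 0 ×ˢ 𝓝 t₀] (fun _ => (1 : ℝ)) :=
    ((isBigO_refl (fun p : ℝ × ℝ => p.1⁻¹) _).smul
      (isBigO_fst_comp_add_smul (isBigO_flow_sub_flow hu hφ hφX.self_of_nhds) h)).trans
      (.of_bound 1 (.of_forall fun p => by simpa using inv_mul_le_one))
  have hq'_bdd : (fun p : ℝ × ℝ => q' p.1 p.2) =O[𝓝[≠] 0 ×ˢ 𝓝 t₀] (fun _ => (1 : ℝ)) :=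
    ((hlin.isBigO_one ℝ).add ((A.isBigO_comp _ _).trans hq_bdd)).congr_left fun p => by simp
  have hq_lim : Tendsto (fun p : ℝ × ℝ => q p.1 p.2) (𝓝[≠] 0 ×ˢ 𝓝 t₀)
      (𝓝 (fderiv ℝ (φ t₀) X h)) :=
    tendsto_prod_nhds_of_isBigO_one_deriv hqq' hq'_bdd hq.self_of_nhds
  have hq'_lim : Tendsto (fun p : ℝ × ℝ => q' p.1 p.2) (𝓝[≠] 0 ×ˢ 𝓝 t₀)
      (𝓝 (A (fderiv ℝ (φ t₀) X h))) := by
    simpa using hlin.add ((A.continuous.tendsto _).comp hq_lim)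
  exact hasDerivAt_of_tendstoUniformlyOnFilter (g' := fun _ => A (fderiv ℝ (φ t₀) X h))
    (tendsto_prod_filter_iff.1 hq'_lim) hqq' hq

end Flow

section MaterialDerivative

variable {E G : Type*} [NormedAddCommGroup E] [NormedSpace ℝ E]
  [NormedAddCommGroup G] [NormedSpace ℝ G]

/-- The material derivative `∂v/∂t + D_x v (u)` of a time-dependent field `v` with respect to the
velocity field `u`: the rate of change of `v` seen by a particle moving with the fluid. -/
def materialDeriv (u : ℝ → E → E) (v : ℝ → E → G) (t : ℝ) (x : E) : G :=
  deriv (fun τ => v τ x) t + fderiv ℝ (v t) x (u t x)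

theorem hasDerivAt_comp_integralCurve {u : ℝ → E → E} {v : ℝ → E → G} {γ : ℝ → E} {t : ℝ}
    (hv : DifferentiableAt ℝ (uncurry v) (t, γ t)) (hγ : HasDerivAt γ (u t (γ t)) t) :
    HasDerivAt (fun τ => v τ (γ τ)) (materialDeriv u v t (γ t)) t := by
  have hcurve {η : ℝ → E} {η' : E} (hη : HasDerivAt η η' t) (hηγ : η t = γ t) :
      HasDerivAt (fun τ => v τ (η τ)) (fderiv ℝ (uncurry v) (t, γ t) (1, η')) t :=
    HasFDerivAt.comp_hasDerivAt_of_eq (f := fun τ => (τ, η τ)) t hv.hasFDerivAt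
      ((hasDerivAt_id t).prodMk hη) (by simp [hηγ])
  refine (hcurve hγ rfl).congr_deriv ?_
  rw [materialDeriv, (hcurve (hasDerivAt_const t (γ t)) rfl).deriv,
    (hasFDerivAt_of_hasFDerivAt_uncurry hv.hasFDerivAt).fderiv, ContinuousLinearMap.comp_apply,
    ContinuousLinearMap.inr_apply, ← map_add]
  simp

end MaterialDerivative

section Divergence

variable {E : Type*} [NormedAddCommGroup E] [NormedSpace ℝ E]

/-- The divergence of a vector field, as the trace of its derivative; it is coordinate-free and
agrees with `divv` on `E3`. It is `0` where the field is not differentiable. -/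
def divergence (w : E → E) (x : E) : ℝ :=
  LinearMap.trace ℝ E (fderiv ℝ w x)

variable [FiniteDimensional ℝ E] {u φ : ℝ → E → E}

theorem continuous_divergence_comp (hu : ContDiff ℝ 1 (uncurry u)) {γ : ℝ → E}
    (hγ : Continuous γ) : Continuous fun t => divergence (u t) (γ t) := by
  have hspatial (t : ℝ) (x : E) :
      fderiv ℝ (u t) x = (fderiv ℝ (uncurry u) (t, x)).comp (.inr ℝ ℝ E) :=
    (hasFDerivAt_of_hasFDerivAt_uncurry
      (hu.differentiable one_ne_zero (t, x)).hasFDerivAt).fderiv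
  have htrace : Continuous fun A : E →L[ℝ] E => LinearMap.trace ℝ E A :=
    ((LinearMap.trace ℝ E).comp (ContinuousLinearMap.coeLM ℝ)).continuous_of_finiteDimensional
  simp only [divergence, hspatial]
  exact htrace.comp (((hu.continuous_fderiv one_ne_zero).comp
    (continuous_id.prodMk hγ)).clm_comp continuous_const)

theorem hasDerivAt_det_fderiv_flow {t : ℝ} {X : E}
    (hu : ContDiffAt ℝ 1 (uncurry u) (t, φ t X)) (hφ : ∀ Y, IsIntegralCurve (φ · Y) u)
    (hφX : ∀ᶠ τ in 𝓝 t, DifferentiableAt ℝ (φ τ) X) :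
    HasDerivAt (fun τ => (fderiv ℝ (φ τ) X).det)
      (divergence (u t) (φ t X) * (fderiv ℝ (φ t) X).det) t :=
  hasDerivAt_linearMap_det (hasDerivAt_fderiv_flow_apply hu hφ hφX)

theorem det_fderiv_flow_eq_mul_exp_integral_divergence {X : E} (hu : ContDiff ℝ 1 (uncurry u))
    (hφ : ∀ Y, IsIntegralCurve (φ · Y) u) (hφX : ∀ t, DifferentiableAt ℝ (φ t) X) (t₀ t : ℝ) :
    (fderiv ℝ (φ t) X).det =
      (fderiv ℝ (φ t₀) X).det * Real.exp (∫ s in t₀..t, divergence (u s) (φ s X)) :=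
  eq_mul_exp_integral_of_hasDerivAt (continuous_divergence_comp hu (hφ X).continuous)
    (fun _ => hasDerivAt_det_fderiv_flow hu.contDiffAt hφ (.of_forall hφX)) t₀ t

theorem hasDerivAt_mul_det_fderiv_flow {v : ℝ → E → ℝ} {t : ℝ} {X : E}
    (hu : ContDiffAt ℝ 1 (uncurry u) (t, φ t X)) (hφ : ∀ Y, IsIntegralCurve (φ · Y) u)
    (hφX : ∀ᶠ τ in 𝓝 t, DifferentiableAt ℝ (φ τ) X)
    (hv : DifferentiableAt ℝ (uncurry v) (t, φ t X)) :
    HasDerivAt (fun τ => v τ (φ τ X) * (fderiv ℝ (φ τ) X).det)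
      ((materialDeriv u v t (φ t X) + v t (φ t X) * divergence (u t) (φ t X)) *
        (fderiv ℝ (φ t) X).det) t :=
  ((hasDerivAt_comp_integralCurve hv (hφ X t)).mul
    (hasDerivAt_det_fderiv_flow hu hφ hφX)).congr_deriv (by ring)

theorem three_form_moving_with_fluid_iff_general {v : ℝ → E → ℝ}
    (hu : ContDiff ℝ 1 (uncurry u)) (hφ0 : ∀ X, φ 0 X = X)
    (hφ : ∀ X, IsIntegralCurve (φ · X) u) (hφd : ∀ t, Differentiable ℝ (φ t))
    (hφsurj : ∀ t, Surjective (φ t)) (hv : Differentiable ℝ (uncurry v)) :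
    (∀ t X, v t (φ t X) * (fderiv ℝ (φ t) X).det = v 0 X) ↔
      ∀ t x, materialDeriv u v t x + v t x * divergence (u t) x = 0 := by
  have hdet0 (X : E) : (fderiv ℝ (φ 0) X).det = 1 := by
    rw [show φ 0 = id from funext hφ0, fderiv_id]
    exact LinearMap.det_id
  have hdet (t : ℝ) (X : E) : (fderiv ℝ (φ t) X).det ≠ 0 := by
    rw [det_fderiv_flow_eq_mul_exp_integral_divergence hu hφ (fun t => hφd t X) 0 t, hdet0, one_mul]
    exact Real.exp_ne_zero _
  have hconst (X : E) : (∀ t, v t (φ t X) * (fderiv ℝ (φ t) X).det = v 0 X) ↔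
      ∀ t, materialDeriv u v t (φ t X) + v t (φ t X) * divergence (u t) (φ t X) = 0 := by
    simpa [hφ0, hdet0, hdet] using forall_eq_iff_of_hasDerivAt (fun t =>
      hasDerivAt_mul_det_fderiv_flow hu.contDiffAt hφ (.of_forall fun τ => hφd τ X)
        (hv (t, φ t X))) 0
  calc (∀ t X, v t (φ t X) * (fderiv ℝ (φ t) X).det = v 0 X)
    _ ↔ ∀ t X, materialDeriv u v t (φ t X) + v t (φ t X) * divergence (u t) (φ t X) = 0 := by
      rw [forall_comm, forall_congr' hconst, forall_comm]
    _ ↔ ∀ t x, materialDeriv u v t x + v t x * divergence (u t) x = 0 :=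
      forall_congr' fun t => ((hφsurj t).forall
        (p := fun x => materialDeriv u v t x + v t x * divergence (u t) x = 0)).symm

end Divergence

/-- The 3-form `v · det` is moving with the fluid iff `v`
satisfies the continuity equation. -/
theorem three_form_moving_with_fluid_iff
    (u φ : ℝ → E3 → E3)
    (F : ℝ → E3 → (E3 ≃L[ℝ] E3))
    (hu : ContDiff ℝ (⊤ : ℕ∞) (Function.uncurry u))
    (hφ0 : ∀ X, φ 0 X = X)
    (hφt : ∀ t X, HasDerivAt (fun τ => φ τ X) (u t (φ t X)) t)
    (hφsmooth : ∀ t, ContDiff ℝ (⊤ : ℕ∞) (φ t))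
    (hφbij : ∀ t, Function.Bijective (φ t))
    (hφinv : ∀ t, ContDiff ℝ (⊤ : ℕ∞) (Function.invFun (φ t)))
    (hF : ∀ t X, (F t X : E3 →L[ℝ] E3) = fderiv ℝ (φ t) X)
    (v : ℝ → E3 → ℝ)
    (hv : ContDiff ℝ 1 (Function.uncurry v)) :
    (∀ t X, v t (φ t X) * LinearMap.det ((F t X : E3 →L[ℝ] E3) : E3 →ₗ[ℝ] E3)
        = v 0 X) ↔
      (∀ t x, deriv (fun τ => v τ x) t + fderiv ℝ (v t) x (u t x)
        + v t x * divv (u t) x = 0) := by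
  simp only [hF]
  exact three_form_moving_with_fluid_iff_general (hu.of_le (by exact_mod_cast le_top)) hφ0
    (fun X t => hφt t X) (fun t => (hφsmooth t).differentiable (by simp))
    (fun t => (hφbij t).surjective) (hv.differentiable one_ne_zero)
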